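/- arXiv:1410.6222 — 5 statements merged into one kernel-verified Lean document; each statement's English description precedes it below -/
import Mathlib

section
/- Let X and Y be real normed spaces, X_m ⊆ X a finite-dimensional subspace, and D ⊆ X a closed convex set such that D_m := D ∩ X_m is nonempty. Let F : X → Y be continuous, y^δ ∈ Y, p ∈ [1, ∞), α > 0, and let f : X → ℝ be nonnegative, lower semicontinuous and coercive. Then the Tikhonov functional T_α(x) = ‖F(x) − y^δ‖^p + α f(x) attains its minimum over D_m: there exists x* ∈ D_m such that T_α(x*) ≤ T_α(x) for all x ∈ D_m. -/
open Filter Topology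

/-!
Every sublevel set of `T_α` lies in a sublevel set of the penalty `f`, because the residual term is
nonnegative. Coercivity therefore makes the sublevel sets of `T_α` on `D ∩ X_m` bounded, lower
semicontinuity makes them closed, and finite dimensionality of `X_m` makes them compact.
-/

theorem exists_isMinOn_of_isCompact_sublevel {X β : Type*} [TopologicalSpace X] [LinearOrder β]
    {s : Set X} {T : X → β} {x₀ : X} (hT : LowerSemicontinuousOn T s) (hx₀ : x₀ ∈ s)
    (hK : IsCompact {x ∈ s | T x ≤ T x₀}) : ∃ x ∈ s, IsMinOn T s x := by
  have hne : {x ∈ s | T x ≤ T x₀}.Nonempty := ⟨x₀, hx₀, le_rfl⟩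
  obtain ⟨x, hx, hmin⟩ :=
    LowerSemicontinuousOn.exists_isMinOn hne hK (hT.mono (Set.sep_subset s _))
  refine ⟨x, hx.1, fun z hz ↦ ?_⟩
  rcases le_total (T z) (T x₀) with hle | hge
  · exact hmin ⟨hz, hle⟩
  · exact hx.2.trans hge

theorem isClosed_sublevel_of_lowerSemicontinuousOn {X β : Type*} [TopologicalSpace X]
    [LinearOrder β] {s : Set X} {T : X → β} (hs : IsClosed s) (hT : LowerSemicontinuousOn T s)
    (c : β) : IsClosed {x ∈ s | T x ≤ c} := by
  obtain ⟨v, hv, hsv⟩ := lowerSemicontinuousOn_iff_preimage_Iic.1 hT c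
  change IsClosed (s ∩ T ⁻¹' Set.Iic c)
  exact hsv ▸ hs.inter hv

theorem isCompact_of_isClosed_of_isBounded_of_subset_submodule {𝕜 X : Type*}
    [NontriviallyNormedField 𝕜] [LocallyCompactSpace 𝕜] [NormedAddCommGroup X] [NormedSpace 𝕜 X]
    (V : Submodule 𝕜 X) [FiniteDimensional 𝕜 V] {K : Set X} (hclosed : IsClosed K)
    (hbdd : Bornology.IsBounded K) (hKV : K ⊆ V) : IsCompact K := by
  have : ProperSpace V := FiniteDimensional.proper 𝕜 V
  have himage : ((↑) : V → X) '' ((↑) ⁻¹' K) = K :=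
    (Subtype.image_preimage_coe _ K).trans (Set.inter_eq_right.2 hKV)
  have hcompact : IsCompact (((↑) : V → X) ⁻¹' K) :=
    Metric.isCompact_of_isClosed_isBounded (hclosed.preimage continuous_subtype_val)
      (Bornology.isBounded_image_subtype_val.1 (himage.symm ▸ hbdd))
  exact himage ▸ hcompact.image continuous_subtype_val

section Tikhonov

variable {X Y : Type*} [SeminormedAddCommGroup Y]

/-- The Tikhonov functional `T_α(x) = ‖F x - y‖ ^ p + α f(x)` with data `y`, exponent `p`,
regularization parameter `α` and penalty `f`. -/
noncomputable def tikhonov (F : X → Y) (y : Y) (p α : ℝ) (f : X → ℝ) (x : X) : ℝ :=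
  ‖F x - y‖ ^ p + α * f x

variable {F : X → Y} {y : Y} {p α : ℝ} {f : X → ℝ}

theorem penalty_le_div_of_tikhonov_le (hα : 0 < α) {x : X} {c : ℝ}
    (hx : tikhonov F y p α f x ≤ c) : f x ≤ c / α := by
  have hresidual : 0 ≤ ‖F x - y‖ ^ p := by positivity
  rw [le_div_iff₀' hα]
  exact (le_add_of_nonneg_left hresidual).trans hx

theorem lowerSemicontinuousOn_tikhonov [TopologicalSpace X] {s : Set X} (hF : ContinuousOn F s)
    (hp : 0 ≤ p) (hα : 0 ≤ α) (hf : LowerSemicontinuousOn f s) :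
    LowerSemicontinuousOn (tikhonov F y p α f) s := by
  have hresidual : ContinuousOn (fun x ↦ ‖F x - y‖ ^ p) s :=
    (hF.sub continuousOn_const).norm.rpow_const fun _ _ ↦ Or.inr hp
  have hpenalty : LowerSemicontinuousOn (fun x ↦ α * f x) s :=
    (continuous_const_mul α).comp_lowerSemicontinuousOn hf (monotone_mul_left_of_nonneg hα)
  exact hresidual.lowerSemicontinuousOn.add hpenalty

theorem isBounded_tikhonov_sublevel [Bornology X] {s : Set X} (hα : 0 < α)
    (hf : ∀ C : ℝ, Bornology.IsBounded {x ∈ s | f x ≤ C}) (c : ℝ) :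
    Bornology.IsBounded {x ∈ s | tikhonov F y p α f x ≤ c} :=
  (hf (c / α)).subset fun _ hx ↦ ⟨hx.1, penalty_le_div_of_tikhonov_le hα hx.2⟩

end Tikhonov

theorem stmt_1_general {𝕜 X Y : Type*} [NontriviallyNormedField 𝕜] [LocallyCompactSpace 𝕜]
    [NormedAddCommGroup X] [NormedSpace 𝕜 X] [SeminormedAddCommGroup Y]
    (Xm : Submodule 𝕜 X) [FiniteDimensional 𝕜 Xm] {s : Set X} (hs : IsClosed s)
    (hsXm : s ⊆ Xm) (hne : s.Nonempty) {F : X → Y} (hF : ContinuousOn F s) (y : Y)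
    {p α : ℝ} (hp : 0 ≤ p) (hα : 0 < α) {f : X → ℝ} (hf : LowerSemicontinuousOn f s)
    (hcoercive : ∀ C : ℝ, Bornology.IsBounded {x ∈ s | f x ≤ C}) :
    ∃ x ∈ s, IsMinOn (tikhonov F y p α f) s x := by
  obtain ⟨x₀, hx₀⟩ := hne
  have hT : LowerSemicontinuousOn (tikhonov F y p α f) s :=
    lowerSemicontinuousOn_tikhonov hF hp hα.le hf
  have hcompact : IsCompact {x ∈ s | tikhonov F y p α f x ≤ tikhonov F y p α f x₀} :=
    isCompact_of_isClosed_of_isBounded_of_subset_submodule Xm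
      (isClosed_sublevel_of_lowerSemicontinuousOn hs hT _)
      (isBounded_tikhonov_sublevel hα hcoercive _)
      (fun _ hx ↦ hsXm hx.1)
  exact exists_isMinOn_of_isCompact_sublevel hT hx₀ hcompact

/-- Existence of Tikhonov minimizers on a finite-dimensional discretized domain. -/
theorem stmt_1 {X Y : Type*} [NormedAddCommGroup X] [NormedSpace ℝ X]
    [NormedAddCommGroup Y] [NormedSpace ℝ Y]
    (Xm : Subspace ℝ X) [FiniteDimensional ℝ Xm]
    (D : Set X) (hDclosed : IsClosed D) (hDconv : Convex ℝ D)
    (hne : (D ∩ (Xm : Set X)).Nonempty)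
    (F : X → Y) (hF : Continuous F) (yδ : Y)
    (p : ℝ) (hp : 1 ≤ p)
    (α : ℝ) (hα : 0 < α)
    (f : X → ℝ) (hf0 : ∀ x, 0 ≤ f x) (hflsc : LowerSemicontinuous f)
    (hfcoer : ∀ C : ℝ, Bornology.IsBounded {x : X | f x ≤ C}) :
    ∃ xs ∈ D ∩ (Xm : Set X), ∀ x ∈ D ∩ (Xm : Set X),
      ‖F xs - yδ‖ ^ p + α * f xs ≤ ‖F x - yδ‖ ^ p + α * f x :=
  stmt_1_general Xm (hDclosed.inter Xm.closed_of_finiteDimensional) Set.inter_subset_right hne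
    hF.continuousOn yδ (zero_le_one.trans hp) hα (hflsc.lowerSemicontinuousOn _)
    fun C ↦ (hfcoer C).subset fun _ hx ↦ hx.2
end

section
/- Let S be a set and let G : S → ℝ and f : S → ℝ be nonnegative functions. For each α > 0 set I(α) := inf_{x ∈ S} (G(x) + α f(x)) and M_α := {x ∈ S : G(x) + α f(x) = I(α)}, and assume M_α ≠ ∅ for every α > 0. Then: (i) the function I : (0, ∞) → ℝ is continuous; (ii) the sets M := {α > 0 : inf_{x ∈ M_α} G(x) < sup_{x ∈ M_α} G(x)} and N := {α > 0 : inf_{x ∈ M_α} f(x) < sup_{x ∈ M_α} f(x)} coincide and are countable. -/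
/-- The value function `I(α) = inf_{x ∈ S} (G x + α f x)` of a Tikhonov-type
minimization. -/
noncomputable def Ival {S : Type*} (G f : S → ℝ) (α : ℝ) : ℝ :=
  ⨅ x : S, (G x + α * f x)

/-- The set of minimizers of `G + α f` over `S`. -/
def Mmin {S : Type*} (G f : S → ℝ) (α : ℝ) : Set S :=
  {x | G x + α * f x = Ival G f α}

/-!
As a pointwise infimum of affine functions of `α`, the value function `I` is concave, hence
continuous on the open half-line. If `x` minimizes `G + α f`, then testing `I(β)` with `x` gives
`I(β) ≤ I(α) + (β - α) f x`, i.e. `f x` is a supergradient of `I` at `α`. Thus the values of `f` on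
minimizers decrease as `α` grows, and the parameters at which they are not unique span disjoint
open intervals, of which there are only countably many. On the minimizers of a fixed `α > 0`, the
relation `G x = I(α) - α f x` makes the values of `G` an injective affine image of those of `f`.
-/

open Set

theorem concaveOn_ciInf {𝕜 E β ι : Type*} [Semiring 𝕜] [PartialOrder 𝕜] [AddCommMonoid E]
    [SMul 𝕜 E] [ConditionallyCompleteLattice β] [AddCommMonoid β] [IsOrderedAddMonoid β]
    [SMul 𝕜 β] [PosSMulMono 𝕜 β] [Nonempty ι] {s : Set E} {g : ι → E → β}
    (hg : ∀ i, ConcaveOn 𝕜 s (g i)) (hbdd : ∀ x ∈ s, BddBelow (range fun i => g i x)) :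
    ConcaveOn 𝕜 s fun x => ⨅ i, g i x := by
  refine ⟨(hg (Classical.arbitrary ι)).1, fun x hx y hy a b ha hb hab => le_ciInf fun i => ?_⟩
  calc a • (⨅ i, g i x) + b • ⨅ i, g i y
      ≤ a • g i x + b • g i y := by
        gcongr
        · exact ciInf_le (hbdd x hx) i
        · exact ciInf_le (hbdd y hy) i
    _ ≤ g i (a • x + b • y) := (hg i).2 hx hy ha hb hab

-- The empty set is covered because `sInf ∅ = sSup ∅ = 0` in `ℝ`.
theorem real_sInf_lt_sSup_iff_nontrivial {s : Set ℝ} (hbelow : BddBelow s) (habove : BddAbove s) :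
    sInf s < sSup s ↔ s.Nontrivial := by
  constructor
  · contrapose!
    intro hs
    rcases hs.eq_empty_or_singleton with rfl | ⟨a, rfl⟩ <;> simp
  · intro hs
    obtain ⟨a, ha, b, hb, hab⟩ := hs.exists_lt
    exact (csInf_le hbelow ha).trans_lt (hab.trans_le (le_csSup habove hb))

theorem countable_setOf_nontrivial_of_antitone {ι X : Type*} [LinearOrder ι] [LinearOrder X]
    [TopologicalSpace X] [OrderClosedTopology X] [DenselyOrdered X]
    [TopologicalSpace.SeparableSpace X] {s : Set ι} {A : ι → Set X}
    (hA : ∀ i ∈ s, ∀ j ∈ s, i < j → ∀ a ∈ A i, ∀ b ∈ A j, b ≤ a) :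
    {i ∈ s | (A i).Nontrivial}.Countable := by
  choose a ha b hb hab using fun i : {i ∈ s | (A i).Nontrivial} => i.2.2.exists_lt
  have hdisj : Pairwise (Function.onFun Disjoint fun i => Ioo (a i) (b i)) := by
    refine (pairwise_disjoint_on _).2 fun i j hij => disjoint_left.2 fun r hri hrj => ?_
    have hba : b j ≤ a i := hA i i.2.1 j j.2.1 hij _ (ha i) _ (hb j)
    exact (hri.1.trans hrj.2).not_ge hba
  exact countable_coe_iff.1 <|
    hdisj.countable_of_isOpen_disjoint (fun _ => isOpen_Ioo) fun i => nonempty_Ioo.2 (hab i)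

section ValueFunction

variable {S : Type*} {G f : S → ℝ} {α β : ℝ}

theorem Ival_le (hα : BddBelow (range fun x => G x + α * f x)) (x : S) :
    Ival G f α ≤ G x + α * f x :=
  ciInf_le hα x

theorem concaveOn_Ival [Nonempty S] {U : Set ℝ} (hU : Convex ℝ U)
    (hbdd : ∀ α ∈ U, BddBelow (range fun x => G x + α * f x)) :
    ConcaveOn ℝ U (Ival G f) := by
  refine concaveOn_ciInf (fun x => ?_) hbdd
  exact (concaveOn_const (G x) hU).add ((LinearMap.mulRight ℝ (f x)).concaveOn hU)

theorem Ival_le_Ival_add_mul {x : S} (hβ : BddBelow (range fun x => G x + β * f x))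
    (hx : x ∈ Mmin G f α) : Ival G f β ≤ Ival G f α + (β - α) * f x := by
  calc Ival G f β ≤ G x + β * f x := Ival_le hβ x
    _ = (G x + α * f x) + (β - α) * f x := by ring
    _ = Ival G f α + (β - α) * f x := congrArg (· + _) hx

theorem le_of_mem_Mmin_of_lt {x y : S} (hα : BddBelow (range fun x => G x + α * f x))
    (hβ : BddBelow (range fun x => G x + β * f x)) (hαβ : α < β) (hx : x ∈ Mmin G f α)
    (hy : y ∈ Mmin G f β) : f y ≤ f x := by
  have hIβα := Ival_le_Ival_add_mul hβ hx
  have hIαβ := Ival_le_Ival_add_mul hα hy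
  exact le_of_mul_le_mul_left (by linarith) (sub_pos.2 hαβ)

theorem bddAbove_image_Mmin_of_lt (hβ : BddBelow (range fun x => G x + β * f x)) (hβα : β < α) :
    BddAbove (f '' Mmin G f α) := by
  refine ⟨(Ival G f α - Ival G f β) / (α - β), forall_mem_image.2 fun x hx => ?_⟩
  rw [le_div_iff₀ (sub_pos.2 hβα)]
  linarith [Ival_le_Ival_add_mul hβ hx]

theorem bddBelow_image_Mmin_of_lt (hβ : BddBelow (range fun x => G x + β * f x)) (hαβ : α < β) :
    BddBelow (f '' Mmin G f α) := by
  refine ⟨(Ival G f β - Ival G f α) / (β - α), forall_mem_image.2 fun x hx => ?_⟩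
  rw [div_le_iff₀ (sub_pos.2 hαβ)]
  linarith [Ival_le_Ival_add_mul hβ hx]

theorem image_Mmin_eq_image_image (G f : S → ℝ) (α : ℝ) :
    G '' Mmin G f α = (fun t => Ival G f α - α * t) '' (f '' Mmin G f α) := by
  rw [image_image]
  exact image_congr fun x hx => eq_sub_of_add_eq hx

theorem nontrivial_image_Mmin_iff (hα : α ≠ 0) :
    (G '' Mmin G f α).Nontrivial ↔ (f '' Mmin G f α).Nontrivial := by
  rw [image_Mmin_eq_image_image]
  exact image_nontrivial (sub_right_injective.comp (mul_right_injective₀ hα))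

theorem sInf_lt_sSup_image_Mmin_iff (hα : 0 < α) (hbelow : BddBelow (f '' Mmin G f α))
    (habove : BddAbove (f '' Mmin G f α)) :
    sInf (G '' Mmin G f α) < sSup (G '' Mmin G f α) ↔
      sInf (f '' Mmin G f α) < sSup (f '' Mmin G f α) := by
  have hanti : Antitone fun t => Ival G f α - α * t := fun _ _ hst =>
    sub_le_sub_left (mul_le_mul_of_nonneg_left hst hα.le) _
  have hGbelow : BddBelow (G '' Mmin G f α) :=
    image_Mmin_eq_image_image G f α ▸ hanti.map_bddAbove habove
  have hGabove : BddAbove (G '' Mmin G f α) :=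
    image_Mmin_eq_image_image G f α ▸ hanti.map_bddBelow hbelow
  rw [real_sInf_lt_sSup_iff_nontrivial hGbelow hGabove,
    real_sInf_lt_sSup_iff_nontrivial hbelow habove, nontrivial_image_Mmin_iff hα.ne']

theorem countable_setOf_nontrivial_image_Mmin {U : Set ℝ}
    (hbdd : ∀ α ∈ U, BddBelow (range fun x => G x + α * f x)) :
    {α ∈ U | (f '' Mmin G f α).Nontrivial}.Countable :=
  countable_setOf_nontrivial_of_antitone fun _ hα _ hβ hαβ =>
    forall_mem_image.2 fun _ hx => forall_mem_image.2 fun _ hy =>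
      le_of_mem_Mmin_of_lt (hbdd _ hα) (hbdd _ hβ) hαβ hx hy

end ValueFunction

theorem stmt_5_general {S : Type*} [Nonempty S] (G f : S → ℝ)
    (hbdd : ∀ α : ℝ, 0 < α → BddBelow (range fun x => G x + α * f x)) :
    ContinuousOn (Ival G f) (Set.Ioi 0) ∧
    {α : ℝ | 0 < α ∧ sInf (G '' Mmin G f α) < sSup (G '' Mmin G f α)} =
      {α : ℝ | 0 < α ∧ sInf (f '' Mmin G f α) < sSup (f '' Mmin G f α)} ∧
    Set.Countable
      {α : ℝ | 0 < α ∧ sInf (G '' Mmin G f α) < sSup (G '' Mmin G f α)} := by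
  have hbelow {α : ℝ} (hα : 0 < α) : BddBelow (f '' Mmin G f α) :=
    bddBelow_image_Mmin_of_lt (hbdd (α + 1) (by positivity)) (lt_add_one α)
  have habove {α : ℝ} (hα : 0 < α) : BddAbove (f '' Mmin G f α) :=
    bddAbove_image_Mmin_of_lt (hbdd (α / 2) (half_pos hα)) (half_lt_self hα)
  have hMN : {α : ℝ | 0 < α ∧ sInf (G '' Mmin G f α) < sSup (G '' Mmin G f α)} =
      {α : ℝ | 0 < α ∧ sInf (f '' Mmin G f α) < sSup (f '' Mmin G f α)} :=
    Set.ext fun α => and_congr_right fun hα =>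
      sInf_lt_sSup_image_Mmin_iff hα (hbelow hα) (habove hα)
  refine ⟨(concaveOn_Ival (convex_Ioi 0) hbdd).continuousOn isOpen_Ioi, hMN, ?_⟩
  rw [hMN]
  refine (countable_setOf_nontrivial_image_Mmin hbdd).mono ?_
  rintro α ⟨hα, hlt⟩
  exact ⟨hα, (real_sInf_lt_sSup_iff_nontrivial (hbelow hα) (habove hα)).1 hlt⟩

/-- The value function `I` is continuous on `(0, ∞)`, and the sets of parameters
at which the residual `G`, respectively the penalty `f`, is not single-valued on
the minimizer set coincide and are countable. -/
theorem stmt_5 {S : Type*} (G f : S → ℝ)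
    (hG : ∀ x, 0 ≤ G x) (hf : ∀ x, 0 ≤ f x)
    (hne : ∀ α : ℝ, 0 < α → (Mmin G f α).Nonempty) :
    ContinuousOn (Ival G f) (Set.Ioi 0) ∧
    {α : ℝ | 0 < α ∧ sInf (G '' Mmin G f α) < sSup (G '' Mmin G f α)} =
      {α : ℝ | 0 < α ∧ sInf (f '' Mmin G f α) < sSup (f '' Mmin G f α)} ∧
    Set.Countable
      {α : ℝ | 0 < α ∧ sInf (G '' Mmin G f α) < sSup (G '' Mmin G f α)} := by
  obtain ⟨x, -⟩ := hne 1 one_pos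
  have : Nonempty S := ⟨x⟩
  exact stmt_5_general G f fun α hα =>
    ⟨0, forall_mem_range.2 fun x => add_nonneg (hG x) (mul_nonneg hα.le (hf x))⟩
end

section
/- Let X be a finite-dimensional real normed space, Y a real normed space, D ⊆ X nonempty, closed and convex, F : X → Y continuous, y^δ ∈ Y, and p ∈ [1, ∞). Let f : X → ℝ be nonnegative, convex, lower semicontinuous and coercive, and let x₀ ∈ D satisfy f(x) = 0 if and only if x = x₀. Let 1 < τ₁ ≤ τ₂ and c > 0, suppose there exists z ∈ D with ‖F(z) − y^δ‖ ≤ c, and suppose ‖F(x₀) − y^δ‖ > τ₂ c. Assume further (no-jump condition): there is no α > 0 for which there exist minimizers u and v of T_α over D with ‖F(u) − y^δ‖ < τ₁ c and ‖F(v) − y^δ‖ > τ₂ c simultaneously. Then there exist α > 0 and a minimizer x of T_α over D such that τ₁ c ≤ ‖F(x) − y^δ‖ ≤ τ₂ c. -/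
/-!
With `t = 1 / α`, the minimizers of the Tikhonov functional are those of `t * ‖F x - y‖ ^ p + f x`,
a problem that still makes sense at `t = 0`, where it selects the minimizers of `f`. There the
residual exceeds the upper threshold, and for large `t` it falls below it. The set-valued map from
`t` to the minimizers has a closed graph and locally stays in a compact sublevel set of `f`, so the
parameters with a minimizer of residual at most `τ₂ c`, and those with a minimizer of residual at
least `τ₁ c`, form two closed sets covering an interval. By connectedness they meet at some `t`;
unless one of the two minimizers found there lies in the band, they form a forbidden jump.
-/

open Filter Set

/-- The minimizers over `D` of the Tikhonov functional with fidelity term `G` and penalty `f`. The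
weight `t` is put on the fidelity term, so that `t = 1 / α` for the usual regularization parameter
`α`, and `t = 0` stands for the limit `α → ∞`. -/
def tikhonovMinimizers {X : Type*} (D : Set X) (G f : X → ℝ) (t : ℝ) : Set X :=
  {u ∈ D | IsMinOn (fun x => t * G x + f x) D u}

section Minimizers

variable {X : Type*} {D : Set X} {G f : X → ℝ} {t T : ℝ} {u z : X}

theorem mem_tikhonovMinimizers_zero :
    u ∈ tikhonovMinimizers D G f 0 ↔ u ∈ D ∧ IsMinOn f D u := by
  simp only [tikhonovMinimizers, mem_ofPred_eq, zero_mul, zero_add]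

theorem mem_tikhonovMinimizers_iff_inv_mul (ht : 0 < t) :
    u ∈ tikhonovMinimizers D G f t ↔
      u ∈ D ∧ ∀ w ∈ D, G u + t⁻¹ * f u ≤ G w + t⁻¹ * f w := by
  have scale (x : X) : t * G x + f x = t * (G x + t⁻¹ * f x) := by field_simp
  simp only [tikhonovMinimizers, mem_ofPred_eq, isMinOn_iff, scale, mul_le_mul_iff_right₀ ht]

theorem penalty_le_of_mem_tikhonovMinimizers (hG : ∀ x ∈ D, 0 ≤ G x) (ht : t ∈ Icc 0 T)
    (hz : z ∈ D) (hu : u ∈ tikhonovMinimizers D G f t) : f u ≤ T * G z + f z := by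
  have hmin : t * G u + f u ≤ t * G z + f z := hu.2 hz
  have hfid : 0 ≤ t * G u := mul_nonneg ht.1 (hG u hu.1)
  have hweight : t * G z ≤ T * G z := mul_le_mul_of_nonneg_right ht.2 (hG z hz)
  linarith

theorem eventually_forall_mem_tikhonovMinimizers_lt {b : ℝ} (hf : BddBelow (f '' D)) (hz : z ∈ D)
    (hGz : G z < b) : ∀ᶠ t in atTop, ∀ u ∈ tikhonovMinimizers D G f t, G u < b := by
  obtain ⟨m, hm⟩ := hf
  have hlarge : Tendsto (fun t : ℝ => t * (b - G z)) atTop atTop :=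
    tendsto_id.atTop_mul_const (sub_pos.2 hGz)
  filter_upwards [eventually_gt_atTop 0, hlarge.eventually_gt_atTop (f z - m)] with t ht hgap u hu
  have hmin : t * G u + f u ≤ t * G z + f z := hu.2 hz
  have hfu : m ≤ f u := hm (mem_image_of_mem f hu.1)
  refine lt_of_mul_lt_mul_left (a := t) ?_ ht.le
  linarith

variable [TopologicalSpace X]

theorem tikhonovMinimizers_nonempty (hD : D.Nonempty)
    (hcpt : ∀ C, IsCompact {x ∈ D | f x ≤ C}) (hf : LowerSemicontinuousOn f D)
    (hGc : ContinuousOn G D) (hG : ∀ x ∈ D, 0 ≤ G x) (ht : 0 ≤ t) :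
    (tikhonovMinimizers D G f t).Nonempty := by
  obtain ⟨z, hz⟩ := hD
  let K := {x ∈ D | f x ≤ t * G z + f z}
  have hzK : z ∈ K := ⟨hz, le_add_of_nonneg_left (mul_nonneg ht (hG z hz))⟩
  have hlsc : LowerSemicontinuousOn (fun x => t * G x + f x) K :=
    ((hGc.const_mul t).lowerSemicontinuousOn.add hf).mono (sep_subset _ _)
  obtain ⟨u, huK, hu⟩ := hlsc.exists_isMinOn ⟨z, hzK⟩ (hcpt _)
  refine ⟨u, huK.1, fun w hw => ?_⟩
  by_cases hwK : w ∈ K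
  · exact hu hwK
  · have hfw : t * G z + f z < f w := not_le.1 fun h => hwK ⟨hw, h⟩
    calc t * G u + f u ≤ t * G z + f z := hu hzK
      _ ≤ f w := hfw.le
      _ ≤ t * G w + f w := le_add_of_nonneg_left (mul_nonneg ht (hG w hw))

theorem isClosed_setOf_exists_mem_tikhonovMinimizers {R : X → ℝ} {S : Set ℝ}
    (hcpt : ∀ C, IsCompact {x ∈ D | f x ≤ C}) (hf : LowerSemicontinuousOn f D)
    (hGc : ContinuousOn G D) (hG : ∀ x ∈ D, 0 ≤ G x) (hR : ContinuousOn R D) (hS : IsClosed S) :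
    IsClosed {t ∈ Icc 0 T | ∃ u ∈ tikhonovMinimizers D G f t, R u ∈ S} := by
  obtain rfl | ⟨z, hz⟩ := D.eq_empty_or_nonempty
  · simp [tikhonovMinimizers]
  let K := {x ∈ D | f x ≤ T * G z + f z}
  have hKD : K ⊆ D := sep_subset _ _
  have : CompactSpace K := isCompact_iff_compactSpace.1 (hcpt _)
  have hfK : LowerSemicontinuous (K.domRestrict f) :=
    lowerSemicontinuous_restrict_iff.2 (hf.mono hKD)
  have hGK : Continuous (K.domRestrict G) := (hGc.mono hKD).domRestrict
  have hRK : Continuous (K.domRestrict R) := (hR.mono hKD).domRestrict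
  have hgap (w : X) : LowerSemicontinuous fun q : ℝ × K =>
      q.1 * (G q.2 - G w) + f q.2 :=
    (continuous_fst.mul ((hGK.comp continuous_snd).sub continuous_const)).lowerSemicontinuous.add
      (hfK.comp continuous_snd)
  have hmins : IsClosed {q : ℝ × K | ∀ w ∈ D, q.1 * (G q.2 - G w) + f q.2 ≤ f w} := by
    simp only [ofPred_forall]
    exact isClosed_biInter fun w _ => (hgap w).isClosed_preimage (f w)
  have hgraph : IsClosed {q : ℝ × K | q.1 ∈ Icc 0 T ∧ R q.2 ∈ S ∧
      ∀ w ∈ D, q.1 * (G q.2 - G w) + f q.2 ≤ f w} :=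
    (isClosed_Icc.preimage continuous_fst).inter
      ((hS.preimage (hRK.comp continuous_snd)).inter hmins)
  convert isClosedMap_fst_of_compactSpace _ hgraph using 1
  ext t
  constructor
  · rintro ⟨ht, u, hu, huS⟩
    refine ⟨(t, ⟨u, hu.1, penalty_le_of_mem_tikhonovMinimizers hG ht hz hu⟩), ⟨ht, huS, ?_⟩, rfl⟩
    intro w hw
    have hmin : t * G u + f u ≤ t * G w + f w := hu.2 hw
    linarith
  · rintro ⟨⟨t, u⟩, ⟨ht, huS, hu⟩, rfl⟩
    refine ⟨ht, u, ⟨hKD u.2, fun w hw => ?_⟩, huS⟩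
    have hmin := hu w hw
    change t * G u + f u ≤ t * G w + f w
    linarith

/-- An intermediate value theorem for the set-valued map `t ↦ R '' tikhonovMinimizers D G f t`. -/
theorem exists_tikhonovMinimizers_le_and_ge {R : X → ℝ} {a b : ℝ} (hab : a ≤ b) (hT : 0 ≤ T)
    (hcpt : ∀ C, IsCompact {x ∈ D | f x ≤ C}) (hf : LowerSemicontinuousOn f D)
    (hGc : ContinuousOn G D) (hG : ∀ x ∈ D, 0 ≤ G x) (hR : ContinuousOn R D)
    (h_zero : ∃ v ∈ tikhonovMinimizers D G f 0, a ≤ R v)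
    (h_right : ∃ u ∈ tikhonovMinimizers D G f T, R u ≤ b) :
    ∃ t ∈ Icc 0 T, ∃ u ∈ tikhonovMinimizers D G f t, ∃ v ∈ tikhonovMinimizers D G f t,
      R u ≤ b ∧ a ≤ R v := by
  have hD : D.Nonempty := h_zero.imp fun _ hv => hv.1.1
  have hcover : Icc 0 T ⊆ {t ∈ Icc 0 T | ∃ u ∈ tikhonovMinimizers D G f t, R u ∈ Iic b} ∪
      {t ∈ Icc 0 T | ∃ v ∈ tikhonovMinimizers D G f t, R v ∈ Ici a} := by
    intro t ht
    obtain ⟨u, hu⟩ := tikhonovMinimizers_nonempty hD hcpt hf hGc hG ht.1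
    exact (le_total (R u) b).imp (fun h => ⟨ht, u, hu, h⟩) fun h => ⟨ht, u, hu, hab.trans h⟩
  obtain ⟨t, ht, ⟨-, u, hu, hub⟩, -, v, hv, hav⟩ :=
    isPreconnected_closed_iff.1 isPreconnected_Icc _ _
      (isClosed_setOf_exists_mem_tikhonovMinimizers hcpt hf hGc hG hR isClosed_Iic)
      (isClosed_setOf_exists_mem_tikhonovMinimizers hcpt hf hGc hG hR isClosed_Ici) hcover
      ⟨T, right_mem_Icc.2 hT, right_mem_Icc.2 hT, h_right⟩
      ⟨0, left_mem_Icc.2 hT, left_mem_Icc.2 hT, h_zero⟩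
  exact ⟨t, ht, u, hu, v, hv, hub, hav⟩

end Minimizers

theorem isCompact_sep_le_of_isBounded {X : Type*} [PseudoMetricSpace X] [ProperSpace X]
    {D : Set X} {f : X → ℝ} {C : ℝ} (hD : IsClosed D) (hf : LowerSemicontinuous f)
    (hbdd : Bornology.IsBounded {x | f x ≤ C}) : IsCompact {x ∈ D | f x ≤ C} :=
  Metric.isCompact_of_isClosed_isBounded (hD.inter (hf.isClosed_preimage C))
    (hbdd.subset inter_subset_right)

theorem stmt_8_general {X Y : Type*} [TopologicalSpace X] [SeminormedAddCommGroup Y]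
    {D : Set X} {F : X → Y} (hF : ContinuousOn F D) (y : Y) {p : ℝ} (hp : 0 < p)
    {f : X → ℝ} (hf : LowerSemicontinuousOn f D) (hcpt : ∀ C, IsCompact {x ∈ D | f x ≤ C})
    {a b : ℝ} (hab : a ≤ b) {z : X} (hz : z ∈ D) (hzb : ‖F z - y‖ < b)
    (hmin : ∀ x ∈ D, IsMinOn f D x → b < ‖F x - y‖)
    (hnojump : ¬ ∃ α : ℝ, 0 < α ∧ ∃ u ∈ D, ∃ v ∈ D,
      (∀ w ∈ D, ‖F u - y‖ ^ p + α * f u ≤ ‖F w - y‖ ^ p + α * f w) ∧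
      (∀ w ∈ D, ‖F v - y‖ ^ p + α * f v ≤ ‖F w - y‖ ^ p + α * f w) ∧
      ‖F u - y‖ < a ∧ b < ‖F v - y‖) :
    ∃ α : ℝ, 0 < α ∧ ∃ x ∈ D,
      (∀ w ∈ D, ‖F x - y‖ ^ p + α * f x ≤ ‖F w - y‖ ^ p + α * f w) ∧
      a ≤ ‖F x - y‖ ∧ ‖F x - y‖ ≤ b := by
  let R : X → ℝ := fun x => ‖F x - y‖
  let G : X → ℝ := fun x => R x ^ p
  have hR : ContinuousOn R D := (hF.sub continuousOn_const).norm
  have hGc : ContinuousOn G D := hR.rpow_const fun _ _ => Or.inr hp.le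
  have hG : ∀ x ∈ D, 0 ≤ G x := fun _ _ => by positivity
  have hb : 0 ≤ b := (norm_nonneg _).trans hzb.le
  have hne {t : ℝ} (ht : 0 ≤ t) : (tikhonovMinimizers D G f t).Nonempty :=
    tikhonovMinimizers_nonempty ⟨z, hz⟩ hcpt hf hGc hG ht
  have h_zero : ∀ v ∈ tikhonovMinimizers D G f 0, b < R v := fun v hv =>
    have hv' := mem_tikhonovMinimizers_zero.1 hv
    hmin v hv'.1 hv'.2
  obtain ⟨v₀, hv₀⟩ := hne le_rfl
  have hbdd : BddBelow (f '' D) :=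
    ⟨f v₀, forall_mem_image.2 fun _ hx => (mem_tikhonovMinimizers_zero.1 hv₀).2 hx⟩
  have hGz : G z < b ^ p := Real.rpow_lt_rpow (norm_nonneg _) hzb hp
  obtain ⟨T, hTb, hT⟩ := ((eventually_forall_mem_tikhonovMinimizers_lt hbdd hz hGz).and
    (eventually_ge_atTop 0)).exists
  obtain ⟨uT, huT⟩ := hne hT
  have huTb : R uT ≤ b := ((Real.rpow_lt_rpow_iff (norm_nonneg _) hb hp).1 (hTb uT huT)).le
  obtain ⟨t, ht, u, hu, v, hv, hub, hav⟩ := exists_tikhonovMinimizers_le_and_ge hab hT hcpt hf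
    hGc hG hR ⟨v₀, hv₀, hab.trans (h_zero v₀ hv₀).le⟩ ⟨uT, huT, huTb⟩
  have ht0 : 0 < t := ht.1.lt_of_ne <| by
    rintro rfl
    exact (h_zero u hu).not_ge hub
  obtain ⟨huD, hu⟩ := (mem_tikhonovMinimizers_iff_inv_mul ht0).1 hu
  obtain ⟨hvD, hv⟩ := (mem_tikhonovMinimizers_iff_inv_mul ht0).1 hv
  by_cases hau : a ≤ R u
  · exact ⟨t⁻¹, inv_pos.2 ht0, u, huD, hu, hau, hub⟩
  · refine ⟨t⁻¹, inv_pos.2 ht0, v, hvD, hv, hav, not_lt.1 fun hbv => ?_⟩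
    exact hnojump ⟨t⁻¹, inv_pos.2 ht0, u, huD, v, hvD, hu, hv, not_le.1 hau, hbv⟩

/-- Well-posedness of the discrete Morozov discrepancy principle: under the no-jump
condition there exist a parameter `α > 0` and a Tikhonov minimizer whose residual lies
in the band `[τ₁ c, τ₂ c]`. -/
theorem stmt_8 {X Y : Type*} [NormedAddCommGroup X] [NormedSpace ℝ X]
    [FiniteDimensional ℝ X]
    [NormedAddCommGroup Y] [NormedSpace ℝ Y]
    (D : Set X) (hDne : D.Nonempty) (hDclosed : IsClosed D) (hDconv : Convex ℝ D)
    (F : X → Y) (hF : Continuous F) (yδ : Y)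
    (p : ℝ) (hp : 1 ≤ p)
    (f : X → ℝ) (hf0 : ∀ x, 0 ≤ f x) (hfconv : ConvexOn ℝ Set.univ f)
    (hflsc : LowerSemicontinuous f)
    (hfcoer : ∀ C : ℝ, Bornology.IsBounded {x : X | f x ≤ C})
    (x₀ : X) (hx₀D : x₀ ∈ D) (hx₀ : ∀ x, f x = 0 ↔ x = x₀)
    (τ₁ τ₂ : ℝ) (hτ₁ : 1 < τ₁) (hτ₁₂ : τ₁ ≤ τ₂)
    (c : ℝ) (hc : 0 < c)
    (z : X) (hzD : z ∈ D) (hz : ‖F z - yδ‖ ≤ c)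
    (hx₀res : τ₂ * c < ‖F x₀ - yδ‖)
    (hnojump : ¬ ∃ α : ℝ, 0 < α ∧ ∃ u ∈ D, ∃ v ∈ D,
      (∀ w ∈ D, ‖F u - yδ‖ ^ p + α * f u ≤ ‖F w - yδ‖ ^ p + α * f w) ∧
      (∀ w ∈ D, ‖F v - yδ‖ ^ p + α * f v ≤ ‖F w - yδ‖ ^ p + α * f w) ∧
      ‖F u - yδ‖ < τ₁ * c ∧ τ₂ * c < ‖F v - yδ‖) :
    ∃ α : ℝ, 0 < α ∧ ∃ x ∈ D,
      (∀ v ∈ D, ‖F x - yδ‖ ^ p + α * f x ≤ ‖F v - yδ‖ ^ p + α * f v) ∧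
      τ₁ * c ≤ ‖F x - yδ‖ ∧ ‖F x - yδ‖ ≤ τ₂ * c := by
  have hmin (x : X) (hx : IsMinOn f D x) : x = x₀ :=
    (hx₀ x).1 (le_antisymm ((hx hx₀D).trans_eq ((hx₀ x₀).2 rfl)) (hf0 x))
  exact stmt_8_general hF.continuousOn yδ (by linarith) (hflsc.lowerSemicontinuousOn D)
    (fun C => isCompact_sep_le_of_isBounded hDclosed hflsc (hfcoer C)) (by gcongr)
    hzD (hz.trans_lt (lt_mul_of_one_lt_left hc (hτ₁.trans_le hτ₁₂)))
    (fun x _ hx => (hmin x hx).symm ▸ hx₀res) hnojump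
end

section
/- Let X and Y be real normed spaces, D ⊆ X weakly sequentially closed, F : X → Y weakly sequentially continuous on D, y ∈ Y, and λ > 1. Let δ_k > 0 with δ_k → 0, y_k ∈ Y with ‖y − y_k‖ ≤ δ_k, and let x_k ∈ D satisfy ‖F(x_k) − y_k‖ ≤ λ δ_k for every k. Assume the sequence (x_k) is bounded and that every bounded sequence in D has a weakly convergent subsequence. Then there is a subsequence (x_{k_l}) converging weakly to some x̃ ∈ D with F(x̃) = y. Moreover, if x† is the unique element of D with F(x†) = y, then the whole sequence (x_k) converges weakly to x†. -/
open Filter Topology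

/-- Weak convergence of a sequence in a normed space: convergence against every
continuous linear functional. -/
def WeakTendsto {E : Type*} [NormedAddCommGroup E] [NormedSpace ℝ E]
    (u : ℕ → E) (x : E) : Prop :=
  ∀ φ : E →L[ℝ] ℝ, Filter.Tendsto (fun n => φ (u n)) Filter.atTop (nhds (φ x))

/-!
Weak sequential continuity of `F` on a weakly sequentially closed set makes the graph of `F` over
that set weakly sequentially closed. Hence, once `F (x k)` converges weakly to `y`, every weak
subsequential limit of `x` solves `F z = y`, and compactness supplies such limits. If only one
solution exists, every subsequence of `x` has a further subsequence converging weakly to it.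
-/

theorem tendsto_of_norm_sub_le_const_mul {ι E : Type*} [SeminormedAddCommGroup E] {l : Filter ι}
    {u v : ι → E} {a : E} {δ : ι → ℝ} {c : ℝ} (hδ : Tendsto δ l (𝓝 0))
    (hv : ∀ i, ‖a - v i‖ ≤ δ i) (huv : ∀ i, ‖u i - v i‖ ≤ c * δ i) : Tendsto u l (𝓝 a) := by
  have hav : Tendsto (fun i => a - v i) l (𝓝 0) := squeeze_zero_norm hv hδ
  have huv' : Tendsto (fun i => u i - v i) l (𝓝 0) :=
    squeeze_zero_norm huv (by simpa only [mul_zero] using hδ.const_mul c)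
  simpa only [sub_sub_sub_cancel_right, sub_zero, sub_add_cancel, zero_add] using
    (huv'.sub hav).add_const a

section WeakTendsto

variable {E : Type*} [NormedAddCommGroup E] [NormedSpace ℝ E] {u : ℕ → E} {a b : E}

theorem WeakTendsto.unique (ha : WeakTendsto u a) (hb : WeakTendsto u b) : a = b :=
  SeparatingDual.eq_iff_forall_dual_eq (R := ℝ) |>.2 fun φ => tendsto_nhds_unique (ha φ) (hb φ)

theorem WeakTendsto.comp (h : WeakTendsto u a) {ψ : ℕ → ℕ} (hψ : Tendsto ψ atTop atTop) :
    WeakTendsto (fun k => u (ψ k)) a :=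
  fun φ => (h φ).comp hψ

theorem weakTendsto_of_tendsto (h : Tendsto u atTop (𝓝 a)) : WeakTendsto u a :=
  fun φ => (φ.continuous.tendsto a).comp h

theorem weakTendsto_of_subseq_weakTendsto
    (h : ∀ ψ : ℕ → ℕ, Tendsto ψ atTop atTop →
      ∃ φ : ℕ → ℕ, WeakTendsto (fun l => u (ψ (φ l))) a) :
    WeakTendsto u a :=
  fun f => tendsto_of_subseq_tendsto fun ψ hψ => (h ψ hψ).imp fun _ hφ => hφ f

/-- Relative weak sequential compactness of a set: every sequence in it has a subsequence
converging weakly to a point, which need not belong to the set. -/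
def IsRelWeaklySeqCompact (S : Set E) : Prop :=
  ∀ u : ℕ → E, (∀ k, u k ∈ S) →
    ∃ (φ : ℕ → ℕ) (z : E), StrictMono φ ∧ WeakTendsto (fun l => u (φ l)) z

theorem isRelWeaklySeqCompact_of_isBounded {D S : Set E} (hSD : S ⊆ D)
    (hS : Bornology.IsBounded S)
    (hD : ∀ u : ℕ → E, (∀ k, u k ∈ D) → Bornology.IsBounded (Set.range u) →
      ∃ (φ : ℕ → ℕ) (z : E), StrictMono φ ∧ WeakTendsto (fun l => u (φ l)) z) :
    IsRelWeaklySeqCompact S :=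
  fun u hu => hD u (fun k => hSD (hu k)) (hS.subset (Set.range_subset_iff.2 hu))

/-- Weak sequential closedness of a set, used for the domain of the operator. -/
def IsWeaklySeqClosed (D : Set E) : Prop :=
  ∀ (u : ℕ → E) (x : E), (∀ k, u k ∈ D) → WeakTendsto u x → x ∈ D

end WeakTendsto

section Operator

variable {X Y : Type*} [NormedAddCommGroup X] [NormedSpace ℝ X]
  [NormedAddCommGroup Y] [NormedSpace ℝ Y] {D : Set X} {F : X → Y} {x : ℕ → X} {y : Y}

/-- Weak sequential continuity of a map on a set, for sequences and limits in that set. -/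
def WeaklySeqContinuousOn (F : X → Y) (D : Set X) : Prop :=
  ∀ (u : ℕ → X) (x : X), (∀ k, u k ∈ D) → x ∈ D → WeakTendsto u x →
    WeakTendsto (fun k => F (u k)) (F x)

/-- Weak sequential closedness of the graph of `F` over `D`, that is, of the operator `F` with
domain `D`; it turns weak limits of approximate solutions into solutions. -/
def HasWeaklySeqClosedGraphOn (F : X → Y) (D : Set X) : Prop :=
  ∀ (u : ℕ → X) (x : X) (y : Y), (∀ k, u k ∈ D) → WeakTendsto u x →
    WeakTendsto (fun k => F (u k)) y → x ∈ D ∧ F x = y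

theorem WeaklySeqContinuousOn.hasWeaklySeqClosedGraphOn (hF : WeaklySeqContinuousOn F D)
    (hD : IsWeaklySeqClosed D) : HasWeaklySeqClosedGraphOn F D := by
  intro u x y huD hux hFu
  have hxD : x ∈ D := hD u x huD hux
  exact ⟨hxD, (hF u x huD hxD hux).unique hFu⟩

theorem HasWeaklySeqClosedGraphOn.exists_subseq_weakTendsto_solution
    (hF : HasWeaklySeqClosedGraphOn F D) (hxD : ∀ k, x k ∈ D)
    (hx : IsRelWeaklySeqCompact (Set.range x)) (hFx : WeakTendsto (fun k => F (x k)) y)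
    {ψ : ℕ → ℕ} (hψ : Tendsto ψ atTop atTop) :
    ∃ φ : ℕ → ℕ, StrictMono φ ∧ ∃ z ∈ D, WeakTendsto (fun l => x (ψ (φ l))) z ∧ F z = y := by
  obtain ⟨φ, z, hφ, hz⟩ := hx (fun l => x (ψ l)) fun l => Set.mem_range_self (ψ l)
  have hFz : WeakTendsto (fun l => F (x (ψ (φ l)))) y := hFx.comp (hψ.comp hφ.tendsto_atTop)
  obtain ⟨hzD, hzy⟩ := hF _ z y (fun _ => hxD _) hz hFz
  exact ⟨φ, hφ, z, hzD, hz, hzy⟩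

theorem HasWeaklySeqClosedGraphOn.weakTendsto_of_unique_solution
    (hF : HasWeaklySeqClosedGraphOn F D) (hxD : ∀ k, x k ∈ D)
    (hx : IsRelWeaklySeqCompact (Set.range x)) (hFx : WeakTendsto (fun k => F (x k)) y)
    {a : X} (ha : ∀ v ∈ D, F v = y → v = a) : WeakTendsto x a := by
  refine weakTendsto_of_subseq_weakTendsto fun ψ hψ => ?_
  obtain ⟨φ, -, z, hzD, hz, hzy⟩ := hF.exists_subseq_weakTendsto_solution hxD hx hFx hψ
  exact ⟨φ, ha z hzD hzy ▸ hz⟩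

theorem stmt_11_general (hF : HasWeaklySeqClosedGraphOn F D) (hxD : ∀ k, x k ∈ D)
    (hx : IsRelWeaklySeqCompact (Set.range x)) (hFx : WeakTendsto (fun k => F (x k)) y) :
    (∃ φ : ℕ → ℕ, StrictMono φ ∧ ∃ z ∈ D, WeakTendsto (fun l => x (φ l)) z ∧ F z = y) ∧
    ∀ a : X, (∀ v ∈ D, F v = y → v = a) → WeakTendsto x a :=
  ⟨hF.exists_subseq_weakTendsto_solution hxD hx hFx tendsto_id,
    fun _ ha => hF.weakTendsto_of_unique_solution hxD hx hFx ha⟩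

end Operator

/-- A bounded sequence satisfying the upper discrepancy bound has a subsequence
converging weakly to a solution of `F x = y`; if the solution is unique, the whole
sequence converges weakly to it. -/
theorem stmt_11 {X Y : Type*} [NormedAddCommGroup X] [NormedSpace ℝ X]
    [NormedAddCommGroup Y] [NormedSpace ℝ Y]
    (D : Set X)
    (hDwsc : ∀ (u : ℕ → X) (x : X), (∀ k, u k ∈ D) → WeakTendsto u x → x ∈ D)
    (F : X → Y)
    (hFwc : ∀ (u : ℕ → X) (x : X), (∀ k, u k ∈ D) → x ∈ D → WeakTendsto u x →
      WeakTendsto (fun k => F (u k)) (F x))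
    (y : Y) (lam : ℝ) (hlam : 1 < lam)
    (δ : ℕ → ℝ) (hδpos : ∀ k, 0 < δ k) (hδ0 : Tendsto δ atTop (𝓝 0))
    (yk : ℕ → Y) (hyk : ∀ k, ‖y - yk k‖ ≤ δ k)
    (x : ℕ → X) (hxD : ∀ k, x k ∈ D)
    (hxdisc : ∀ k, ‖F (x k) - yk k‖ ≤ lam * δ k)
    (hxbdd : Bornology.IsBounded (Set.range x))
    (hcpt : ∀ (u : ℕ → X), (∀ k, u k ∈ D) → Bornology.IsBounded (Set.range u) →
      ∃ (φ : ℕ → ℕ) (z : X), StrictMono φ ∧ WeakTendsto (fun l => u (φ l)) z) :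
    (∃ (φ : ℕ → ℕ), StrictMono φ ∧ ∃ xt ∈ D,
      WeakTendsto (fun l => x (φ l)) xt ∧ F xt = y) ∧
    ∀ xdag : X, xdag ∈ D → F xdag = y → (∀ v ∈ D, F v = y → v = xdag) →
      WeakTendsto x xdag := by
  have hF : HasWeaklySeqClosedGraphOn F D :=
    WeaklySeqContinuousOn.hasWeaklySeqClosedGraphOn hFwc hDwsc
  have hx : IsRelWeaklySeqCompact (Set.range x) :=
    isRelWeaklySeqCompact_of_isBounded (Set.range_subset_iff.2 hxD) hxbdd hcpt
  have hFx : WeakTendsto (fun k => F (x k)) y :=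
    weakTendsto_of_tendsto (tendsto_of_norm_sub_le_const_mul hδ0 hyk hxdisc)
  exact (stmt_11_general hF hxD hx hFx).imp_right fun h xdag _ _ huniq => h xdag huniq
end

section
/- Let X and Y be real normed spaces, D ⊆ X, D_m ⊆ D, F : X → Y, y^δ ∈ Y, δ > 0, p ∈ [1, ∞), α > 0, 1 < τ, ε ∈ (0, τ − 1) and ε′ ∈ (ε, τ − 1). Let f : X → ℝ be convex and nonnegative, let x† ∈ D satisfy ‖F(x†) − y^δ‖ ≤ (τ − ε′)δ, and let ξ be a continuous linear functional on X that is a subgradient of f at x†. Define H_m := {v ∈ D_m : ‖F(v) − y^δ‖ < (τ − ε)δ} and assume H_m ≠ ∅, and define κ := inf{ f(v) : v ∈ D, ‖F(v) − y^δ‖ ≤ (τ − ε′)δ }. Suppose inf_{v ∈ H_m} f(v) ≤ κ + ε^p δ^p / α, and suppose x ∈ D_m minimizes T_α(v) = ‖F(v) − y^δ‖^p + α f(v) over D_m and satisfies τδ ≤ ‖F(x) − y^δ‖. Then D_ξ(x, x†) ≤ ξ(x† − x), where D_ξ(u, x†) := f(u) − f(x†) − ξ(u − x†). -/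
/-!
Comparing the minimizer `x` with a point `v` whose discrepancy is smaller by at least `b` gives
`α * (f v - f x) ≥ r x ^ p - r v ^ p ≥ b ^ p`, because `t ↦ t ^ p` is superadditive on `[0, ∞)`
for `p ≥ 1`. With `b = ε * δ` this gain absorbs exactly the slack allowed between the infimum of `f`
over `H_m` and `κ`, so `f x ≤ κ ≤ f x†`. The Bregman estimate is a rewriting of `f x ≤ f x†`:
the term `-ξ (x - x†)` occurs on both of its sides.
-/

section Bregman

variable {X Φ : Type*} [AddGroup X] [FunLike Φ X ℝ]

/-- The Bregman distance `D_ξ(u, x)` of `f` at `x`. It is defined for every functional `ξ`;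
for convex `f` it is the usual notion when `ξ` is a subgradient of `f` at `x`. -/
def bregmanDist (f : X → ℝ) (ξ : Φ) (u x : X) : ℝ :=
  f u - f x - ξ (u - x)

lemma bregmanDist_le_map_sub_iff [AddMonoidHomClass Φ X ℝ] {f : X → ℝ} {ξ : Φ} {u x : X} :
    bregmanDist f ξ u x ≤ ξ (x - u) ↔ f u ≤ f x := by
  rw [bregmanDist, ← neg_sub u x, map_neg, sub_le_iff_le_add, neg_add_cancel, sub_nonpos]

end Bregman

section Tikhonov

variable {X : Type*} {r f : X → ℝ} {p α b : ℝ} {A : Set X} {x : X}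

/-- The Tikhonov functional with discrepancy `r`, exponent `p`, regularization parameter `α` and
penalty `f`. For an equation `F v = y` in a normed space, the discrepancy is `r v = ‖F v - y‖`. -/
noncomputable def tikhonovFunctional (r : X → ℝ) (p α : ℝ) (f : X → ℝ) (v : X) : ℝ :=
  r v ^ p + α * f v

lemma penalty_add_rpow_div_le_of_tikhonovFunctional_le {v : X} (hr : 0 ≤ r v) (hb : 0 ≤ b)
    (hp : 1 ≤ p) (hα : 0 < α) (hgap : r v + b ≤ r x)
    (hle : tikhonovFunctional r p α f x ≤ tikhonovFunctional r p α f v) :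
    f x + b ^ p / α ≤ f v := by
  have hpow : r v ^ p + b ^ p ≤ r x ^ p :=
    calc r v ^ p + b ^ p ≤ (r v + b) ^ p := Real.add_rpow_le_rpow_add hr hb hp
      _ ≤ r x ^ p := by gcongr
  have hgain : b ^ p / α ≤ f v - f x := by
    rw [div_le_iff₀' hα]
    unfold tikhonovFunctional at hle
    linarith
  linarith

lemma penalty_le_of_isMinOn_tikhonovFunctional {κ : ℝ} (hr : ∀ v ∈ A, 0 ≤ r v) (hb : 0 ≤ b)
    (hp : 1 ≤ p) (hα : 0 < α) (hA : A.Nonempty) (hgap : ∀ v ∈ A, r v + b ≤ r x)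
    (hmin : IsMinOn (tikhonovFunctional r p α f) A x) (hκ : sInf (f '' A) ≤ κ + b ^ p / α) :
    f x ≤ κ := by
  have hgain : f x + b ^ p / α ≤ sInf (f '' A) :=
    le_csInf (hA.image f) <| Set.forall_mem_image.mpr fun v hv ↦
      penalty_add_rpow_div_le_of_tikhonovFunctional_le (hr v hv) hb hp hα (hgap v hv) (hmin hv)
  exact le_of_add_le_add_right (hgain.trans hκ)

theorem stmt_15_general {K : Set X} {τ ε δ : ℝ} {xdag : X} (hr : ∀ v ∈ A, 0 ≤ r v) (hδ : 0 ≤ δ)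
    (hp : 1 ≤ p) (hα : 0 < α) (hε : 0 ≤ ε)
    (hne : {v | v ∈ A ∧ r v < (τ - ε) * δ}.Nonempty)
    (hinf : sInf (f '' {v | v ∈ A ∧ r v < (τ - ε) * δ}) ≤ sInf (f '' K) + ε ^ p * δ ^ p / α)
    (hfK : BddBelow (f '' K)) (hxdag : xdag ∈ K)
    (hmin : IsMinOn (tikhonovFunctional r p α f) A x) (hdisc : τ * δ ≤ r x) :
    f x ≤ f xdag := by
  have hgap : ∀ v ∈ {v | v ∈ A ∧ r v < (τ - ε) * δ}, r v + ε * δ ≤ r x :=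
    fun v hv ↦ by linarith [hv.2]
  rw [← Real.mul_rpow hε hδ] at hinf
  calc f x ≤ sInf (f '' K) :=
        penalty_le_of_isMinOn_tikhonovFunctional (fun v hv ↦ hr v hv.1) (mul_nonneg hε hδ) hp hα
          hne hgap (hmin.on_subset fun _ hv ↦ hv.1) hinf
    _ ≤ f xdag := csInf_le hfK (Set.mem_image_of_mem f hxdag)

end Tikhonov

/-- Refined Bregman-distance estimate: if the infimum of the penalty over the small
residual set `H_m` nearly attains the continuous threshold value `κ`, then the
Bregman distance of the Tikhonov minimizer is controlled by the subgradient term. -/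
theorem stmt_15 {X Y : Type*} [NormedAddCommGroup X] [NormedSpace ℝ X]
    [NormedAddCommGroup Y] [NormedSpace ℝ Y]
    (D : Set X) (Dm : Set X) (hDm : Dm ⊆ D)
    (F : X → Y) (yδ : Y) (δ : ℝ) (hδ : 0 < δ)
    (p : ℝ) (hp : 1 ≤ p) (α : ℝ) (hα : 0 < α)
    (τ ε ε' : ℝ) (hτ : 1 < τ) (hε : ε ∈ Set.Ioo 0 (τ - 1))
    (hε' : ε' ∈ Set.Ioo ε (τ - 1))
    (f : X → ℝ) (hfconv : ConvexOn ℝ Set.univ f) (hf0 : ∀ x, 0 ≤ f x)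
    (xdag : X) (hxdagD : xdag ∈ D)
    (hxdagres : ‖F xdag - yδ‖ ≤ (τ - ε') * δ)
    (ξ : X →L[ℝ] ℝ) (hξ : ∀ u : X, f xdag + ξ (u - xdag) ≤ f u)
    (hHne : {v | v ∈ Dm ∧ ‖F v - yδ‖ < (τ - ε) * δ}.Nonempty)
    (hinf : sInf (f '' {v | v ∈ Dm ∧ ‖F v - yδ‖ < (τ - ε) * δ}) ≤
      sInf (f '' {v | v ∈ D ∧ ‖F v - yδ‖ ≤ (τ - ε') * δ}) + ε ^ p * δ ^ p / α)
    (x : X) (hxmem : x ∈ Dm)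
    (hxmin : ∀ v ∈ Dm, ‖F x - yδ‖ ^ p + α * f x ≤ ‖F v - yδ‖ ^ p + α * f v)
    (hxdisc : τ * δ ≤ ‖F x - yδ‖) :
    f x - f xdag - ξ (x - xdag) ≤ ξ (xdag - x) :=
  bregmanDist_le_map_sub_iff.mpr <|
    stmt_15_general (r := fun v ↦ ‖F v - yδ‖) (fun _ _ ↦ norm_nonneg _) hδ.le hp hα hε.1.le
      hHne hinf ⟨0, Set.forall_mem_image.mpr fun v _ ↦ hf0 v⟩ ⟨hxdagD, hxdagres⟩ hxmin hxdisc
end
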